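/- Pointwise relatedness implies exact equality for well-typed terms: if M ∈ A [Ψ], N ∈ A [Ψ], and for every total dimension substitution ψ : Ψ′ → Ψ the instances Mψ and Nψ evaluate to values related in the PER named by the value A′ of Aψ (i.e. Mψ ≈ Nψ ∈ ⟦A′⟧ after evaluation), then M ≐ N ∈ A [Ψ]. -/

import Mathlib

/-!
Formalization of the syntax, operational semantics, and meaning explanations of
Angiuli–Harper–Wilson computational higher type theory ("Computational
higher-dimensional type theory").  Dimension binders are handled in
locally-nameless style: free dimension names are natural numbers (`Dim.fvar`),
bound dimension variables are de Bruijn indices (`Dim.bvar`).  Term variables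
are de Bruijn indices (`Tm.var`).
-/

namespace CHTT

/-- Dimension terms: the constants 0 and 1, free dimension names, and bound
dimension variables (de Bruijn, for the binders `x.A`, `y.N`, `x.L`). -/
inductive Dim : Type
  | d0 : Dim
  | d1 : Dim
  | fvar : ℕ → Dim
  | bvar : ℕ → Dim
deriving DecidableEq, Repr

namespace Dim

/-- Apply a dimension substitution (acting on free dimension names). -/
def subst (ψ : ℕ → Dim) : Dim → Dim
  | fvar x => ψ x
  | d0 => d0
  | d1 => d1
  | bvar i => bvar i

/-- Instantiate the bound dimension variable `k` with `r`. -/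
def openAt (k : ℕ) (r : Dim) : Dim → Dim
  | bvar i => if i = k then r else bvar i
  | fvar x => fvar x
  | d0 => d0
  | d1 => d1

/-- Abstract the free dimension name `x` to the bound variable `k`. -/
def closeAt (k x : ℕ) : Dim → Dim
  | fvar y => if y = x then bvar k else fvar y
  | bvar i => bvar i
  | d0 => d0
  | d1 => d1

/-- Free dimension names of a dimension term. -/
def fd : Dim → Finset ℕ
  | fvar x => {x}
  | bvar _ => ∅
  | d0 => ∅
  | d1 => ∅

end Dim

/-- A dimension term is a constant (`0` or `1`). -/
def IsConst (r : Dim) : Prop := r = Dim.d0 ∨ r = Dim.d1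

/-- Well-formed dimension term relative to a dimension context `Ψ`. -/
def wfDim (Ψ : Finset ℕ) : Dim → Prop
  | Dim.d0 => True
  | Dim.d1 => True
  | Dim.fvar x => x ∈ Ψ
  | Dim.bvar _ => False

/-- Terms of computational higher type theory. -/
inductive Tm : Type
  | var : ℕ → Tm                              -- term variable (de Bruijn)
  | arr : Tm → Tm → Tm                        -- A → B
  | prod : Tm → Tm → Tm                       -- A × B
  | bool : Tm
  | notb : Dim → Tm                           -- not(r)
  | circle : Tm                               -- S¹
  | lam : Tm → Tm                             -- λa.M
  | app : Tm → Tm → Tm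
  | pair : Tm → Tm → Tm
  | fst : Tm → Tm
  | snd : Tm → Tm
  | tt : Tm                                   -- true
  | ff : Tm                                   -- false
  | ifb : Tm → Tm → Tm → Tm → Tm              -- if(A; M; T; F)
  | notel : Dim → Tm → Tm                     -- not_el(r; M)
  | base : Tm
  | loop : Dim → Tm
  | celim : Tm → Tm → Tm → Tm → Tm            -- S¹-elim(A; M; P; x.L), L binds dim bvar 0
  | coe : Tm → Dim → Dim → Tm → Tm            -- coe(x.A; r⇝r'; M), A binds dim bvar 0
  | hcom : Dim → Tm → Dim → Dim → Tm → Tm → Tm → Tm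
      -- hcom^{r₁}_A(r⇝r'; M; y.N⁰, y.N¹), the tubes N⁰ N¹ bind dim bvar 0
deriving DecidableEq, Repr

namespace Tm

/-- Apply a dimension substitution (acting on free dimension names) to a term. -/
def dsubst (ψ : ℕ → Dim) : Tm → Tm
  | var a => var a
  | arr A B => arr (A.dsubst ψ) (B.dsubst ψ)
  | prod A B => prod (A.dsubst ψ) (B.dsubst ψ)
  | bool => bool
  | notb r => notb (r.subst ψ)
  | circle => circle
  | lam M => lam (M.dsubst ψ)
  | app M N => app (M.dsubst ψ) (N.dsubst ψ)
  | pair M N => pair (M.dsubst ψ) (N.dsubst ψ)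
  | fst M => fst (M.dsubst ψ)
  | snd M => snd (M.dsubst ψ)
  | tt => tt
  | ff => ff
  | ifb A M T F => ifb (A.dsubst ψ) (M.dsubst ψ) (T.dsubst ψ) (F.dsubst ψ)
  | notel r M => notel (r.subst ψ) (M.dsubst ψ)
  | base => base
  | loop r => loop (r.subst ψ)
  | celim A M P L => celim (A.dsubst ψ) (M.dsubst ψ) (P.dsubst ψ) (L.dsubst ψ)
  | coe A r r' M => coe (A.dsubst ψ) (r.subst ψ) (r'.subst ψ) (M.dsubst ψ)
  | hcom e A r r' M N0 N1 =>
      hcom (e.subst ψ) (A.dsubst ψ) (r.subst ψ) (r'.subst ψ) (M.dsubst ψ)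
        (N0.dsubst ψ) (N1.dsubst ψ)

/-- Substitution of a dimension term for a single free dimension name:
`M⟨r/x⟩`. -/
def dsubstName (x : ℕ) (r : Dim) (M : Tm) : Tm :=
  M.dsubst (fun y => if y = x then r else Dim.fvar y)

/-- Instantiate the bound dimension variable `k` with the dimension `r`. -/
def dopenAt (k : ℕ) (r : Dim) : Tm → Tm
  | var a => var a
  | arr A B => arr (A.dopenAt k r) (B.dopenAt k r)
  | prod A B => prod (A.dopenAt k r) (B.dopenAt k r)
  | bool => bool
  | notb r1 => notb (r1.openAt k r)
  | circle => circle
  | lam M => lam (M.dopenAt k r)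
  | app M N => app (M.dopenAt k r) (N.dopenAt k r)
  | pair M N => pair (M.dopenAt k r) (N.dopenAt k r)
  | fst M => fst (M.dopenAt k r)
  | snd M => snd (M.dopenAt k r)
  | tt => tt
  | ff => ff
  | ifb A M T F => ifb (A.dopenAt k r) (M.dopenAt k r) (T.dopenAt k r) (F.dopenAt k r)
  | notel r1 M => notel (r1.openAt k r) (M.dopenAt k r)
  | base => base
  | loop r1 => loop (r1.openAt k r)
  | celim A M P L =>
      celim (A.dopenAt k r) (M.dopenAt k r) (P.dopenAt k r) (L.dopenAt (k+1) r)
  | coe A r1 r2 M =>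
      coe (A.dopenAt (k+1) r) (r1.openAt k r) (r2.openAt k r) (M.dopenAt k r)
  | hcom e A r1 r2 M N0 N1 =>
      hcom (e.openAt k r) (A.dopenAt k r) (r1.openAt k r) (r2.openAt k r)
        (M.dopenAt k r) (N0.dopenAt (k+1) r) (N1.dopenAt (k+1) r)

/-- Instantiate the outermost bound dimension variable: for a dimension binder
`y.N`, `N.dopen r` is `N⟨r/y⟩`. -/
def dopen (r : Dim) (M : Tm) : Tm := M.dopenAt 0 r

/-- Abstract the free dimension name `x` to the bound variable `k`. -/
def closeAt (k x : ℕ) : Tm → Tm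
  | var a => var a
  | arr A B => arr (A.closeAt k x) (B.closeAt k x)
  | prod A B => prod (A.closeAt k x) (B.closeAt k x)
  | bool => bool
  | notb r1 => notb (r1.closeAt k x)
  | circle => circle
  | lam M => lam (M.closeAt k x)
  | app M N => app (M.closeAt k x) (N.closeAt k x)
  | pair M N => pair (M.closeAt k x) (N.closeAt k x)
  | fst M => fst (M.closeAt k x)
  | snd M => snd (M.closeAt k x)
  | tt => tt
  | ff => ff
  | ifb A M T F => ifb (A.closeAt k x) (M.closeAt k x) (T.closeAt k x) (F.closeAt k x)
  | notel r1 M => notel (r1.closeAt k x) (M.closeAt k x)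
  | base => base
  | loop r1 => loop (r1.closeAt k x)
  | celim A M P L =>
      celim (A.closeAt k x) (M.closeAt k x) (P.closeAt k x) (L.closeAt (k+1) x)
  | coe A r1 r2 M =>
      coe (A.closeAt (k+1) x) (r1.closeAt k x) (r2.closeAt k x) (M.closeAt k x)
  | hcom e A r1 r2 M N0 N1 =>
      hcom (e.closeAt k x) (A.closeAt k x) (r1.closeAt k x) (r2.closeAt k x)
        (M.closeAt k x) (N0.closeAt (k+1) x) (N1.closeAt (k+1) x)

/-- Abstract a free dimension name, producing the body of a dimension binder:
`x.(M)`. -/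
def close (x : ℕ) (M : Tm) : Tm := M.closeAt 0 x

/-- Free dimension names of a term: `fd(M)`. -/
def fd : Tm → Finset ℕ
  | var _ => ∅
  | arr A B => A.fd ∪ B.fd
  | prod A B => A.fd ∪ B.fd
  | bool => ∅
  | notb r => r.fd
  | circle => ∅
  | lam M => M.fd
  | app M N => M.fd ∪ N.fd
  | pair M N => M.fd ∪ N.fd
  | fst M => M.fd
  | snd M => M.fd
  | tt => ∅
  | ff => ∅
  | ifb A M T F => A.fd ∪ M.fd ∪ T.fd ∪ F.fd
  | notel r M => r.fd ∪ M.fd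
  | base => ∅
  | loop r => r.fd
  | celim A M P L => A.fd ∪ M.fd ∪ P.fd ∪ L.fd
  | coe A r r' M => A.fd ∪ r.fd ∪ r'.fd ∪ M.fd
  | hcom e A r r' M N0 N1 => e.fd ∪ A.fd ∪ r.fd ∪ r'.fd ∪ M.fd ∪ N0.fd ∪ N1.fd

/-- Shift term variables `≥ c` up by one (for going under a `lam`). -/
def lift (c : ℕ) : Tm → Tm
  | var a => if a < c then var a else var (a+1)
  | arr A B => arr (A.lift c) (B.lift c)
  | prod A B => prod (A.lift c) (B.lift c)
  | bool => bool
  | notb r => notb r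
  | circle => circle
  | lam M => lam (M.lift (c+1))
  | app M N => app (M.lift c) (N.lift c)
  | pair M N => pair (M.lift c) (N.lift c)
  | fst M => fst (M.lift c)
  | snd M => snd (M.lift c)
  | tt => tt
  | ff => ff
  | ifb A M T F => ifb (A.lift c) (M.lift c) (T.lift c) (F.lift c)
  | notel r M => notel r (M.lift c)
  | base => base
  | loop r => loop r
  | celim A M P L => celim (A.lift c) (M.lift c) (P.lift c) (L.lift c)
  | coe A r r' M => coe (A.lift c) r r' (M.lift c)
  | hcom e A r r' M N0 N1 =>
      hcom e (A.lift c) r r' (M.lift c) (N0.lift c) (N1.lift c)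

/-- Substitute `N` for term variable `k` (de Bruijn), decrementing the
variables above `k`: used for β-reduction `M[N/a]`. -/
def tsubst : Tm → ℕ → Tm → Tm
  | var a, k, N => if a = k then N else if k < a then var (a-1) else var a
  | arr A B, k, N => arr (A.tsubst k N) (B.tsubst k N)
  | prod A B, k, N => prod (A.tsubst k N) (B.tsubst k N)
  | bool, _, _ => bool
  | notb r, _, _ => notb r
  | circle, _, _ => circle
  | lam M, k, N => lam (M.tsubst (k+1) (N.lift 0))
  | app M M', k, N => app (M.tsubst k N) (M'.tsubst k N)
  | pair M M', k, N => pair (M.tsubst k N) (M'.tsubst k N)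
  | fst M, k, N => fst (M.tsubst k N)
  | snd M, k, N => snd (M.tsubst k N)
  | tt, _, _ => tt
  | ff, _, _ => ff
  | ifb A M T F, k, N => ifb (A.tsubst k N) (M.tsubst k N) (T.tsubst k N) (F.tsubst k N)
  | notel r M, k, N => notel r (M.tsubst k N)
  | base, _, _ => base
  | loop r, _, _ => loop r
  | celim A M P L, k, N => celim (A.tsubst k N) (M.tsubst k N) (P.tsubst k N) (L.tsubst k N)
  | coe A r r' M, k, N => coe (A.tsubst k N) r r' (M.tsubst k N)
  | hcom e A r r' M N0 N1, k, N =>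
      hcom e (A.tsubst k N) r r' (M.tsubst k N) (N0.tsubst k N) (N1.tsubst k N)

/-- Simultaneous substitution of a list of (closed) terms for the term
variables, the head of the list standing for variable `0`. -/
def msubstAt (d : ℕ) (γ : List Tm) : Tm → Tm
  | var a => if a < d then var a else γ.getD (a - d) (var a)
  | arr A B => arr (A.msubstAt d γ) (B.msubstAt d γ)
  | prod A B => prod (A.msubstAt d γ) (B.msubstAt d γ)
  | bool => bool
  | notb r => notb r
  | circle => circle
  | lam M => lam (M.msubstAt (d+1) γ)
  | app M N => app (M.msubstAt d γ) (N.msubstAt d γ)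
  | pair M N => pair (M.msubstAt d γ) (N.msubstAt d γ)
  | fst M => fst (M.msubstAt d γ)
  | snd M => snd (M.msubstAt d γ)
  | tt => tt
  | ff => ff
  | ifb A M T F => ifb (A.msubstAt d γ) (M.msubstAt d γ) (T.msubstAt d γ) (F.msubstAt d γ)
  | notel r M => notel r (M.msubstAt d γ)
  | base => base
  | loop r => loop r
  | celim A M P L => celim (A.msubstAt d γ) (M.msubstAt d γ) (P.msubstAt d γ) (L.msubstAt d γ)
  | coe A r r' M => coe (A.msubstAt d γ) r r' (M.msubstAt d γ)
  | hcom e A r r' M N0 N1 =>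
      hcom e (A.msubstAt d γ) r r' (M.msubstAt d γ) (N0.msubstAt d γ) (N1.msubstAt d γ)

/-- Simultaneous (closing) term substitution `Mγ`. -/
def msubst (γ : List Tm) (M : Tm) : Tm := M.msubstAt 0 γ

end Tm

/-- `not(M)`, the boolean negation term, abbreviates `if(bool; M; false; true)`. -/
def notTm (M : Tm) : Tm := Tm.ifb Tm.bool M Tm.ff Tm.tt

/-- The canonical forms (values) of the language. -/
inductive IsVal : Tm → Prop
  | arr (A B : Tm) : IsVal (Tm.arr A B)
  | prod (A B : Tm) : IsVal (Tm.prod A B)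
  | bool : IsVal Tm.bool
  | notb (x : ℕ) : IsVal (Tm.notb (Dim.fvar x))
  | circle : IsVal Tm.circle
  | lam (M : Tm) : IsVal (Tm.lam M)
  | pair (M N : Tm) : IsVal (Tm.pair M N)
  | tt : IsVal Tm.tt
  | ff : IsVal Tm.ff
  | base : IsVal Tm.base
  | loop (x : ℕ) : IsVal (Tm.loop (Dim.fvar x))
  | notel (x : ℕ) (M : Tm) : IsVal (Tm.notel (Dim.fvar x) M)
  | hcomBool {x : ℕ} {r r' : Dim} (M N0 N1 : Tm) :
      r ≠ r' → IsVal (Tm.hcom (Dim.fvar x) Tm.bool r r' M N0 N1)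
  | hcomCircle {x : ℕ} {r r' : Dim} (M N0 N1 : Tm) :
      r ≠ r' → IsVal (Tm.hcom (Dim.fvar x) Tm.circle r r' M N0 N1)

/-- The one-step deterministic weak head reduction `M ↦ M′`. -/
inductive Step : Tm → Tm → Prop
  -- types
  | notbConst {ε : Dim} : IsConst ε → Step (Tm.notb ε) Tm.bool
  -- hcom/coe evaluate their type subscript
  | coeTy {A A' : Tm} {r r' : Dim} {M : Tm} :
      Step A A' → Step (Tm.coe A r r' M) (Tm.coe A' r r' M)
  | hcomTy {e : Dim} {A A' : Tm} {r r' : Dim} {M N0 N1 : Tm} :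
      Step A A' → Step (Tm.hcom e A r r' M N0 N1) (Tm.hcom e A' r r' M N0 N1)
  -- function types
  | appL {M M' N : Tm} : Step M M' → Step (Tm.app M N) (Tm.app M' N)
  | appBeta {M N : Tm} : Step (Tm.app (Tm.lam M) N) (M.tsubst 0 N)
  | hcomArr {e : Dim} {A B : Tm} {r r' : Dim} {M N0 N1 : Tm} :
      Step (Tm.hcom e (Tm.arr A B) r r' M N0 N1)
        (Tm.lam (Tm.hcom e B r r'
          (Tm.app (M.lift 0) (Tm.var 0))
          (Tm.app (N0.lift 0) (Tm.var 0))
          (Tm.app (N1.lift 0) (Tm.var 0))))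
  | coeArr {A B : Tm} {r r' : Dim} {M : Tm} :
      Step (Tm.coe (Tm.arr A B) r r' M)
        (Tm.lam (Tm.coe B r r'
          (Tm.app (M.lift 0) (Tm.coe A r' r (Tm.var 0)))))
  -- product types
  | fstCong {M M' : Tm} : Step M M' → Step (Tm.fst M) (Tm.fst M')
  | sndCong {M M' : Tm} : Step M M' → Step (Tm.snd M) (Tm.snd M')
  | fstPair {M N : Tm} : Step (Tm.fst (Tm.pair M N)) M
  | sndPair {M N : Tm} : Step (Tm.snd (Tm.pair M N)) N
  | hcomProd {e : Dim} {A B : Tm} {r r' : Dim} {M N0 N1 : Tm} :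
      Step (Tm.hcom e (Tm.prod A B) r r' M N0 N1)
        (Tm.pair
          (Tm.hcom e A r r' (Tm.fst M) (Tm.fst N0) (Tm.fst N1))
          (Tm.hcom e B r r' (Tm.snd M) (Tm.snd N0) (Tm.snd N1)))
  | coeProd {A B : Tm} {r r' : Dim} {M : Tm} :
      Step (Tm.coe (Tm.prod A B) r r' M)
        (Tm.pair (Tm.coe A r r' (Tm.fst M)) (Tm.coe B r r' (Tm.snd M)))
  -- booleans
  | hcomBool0 {A : Tm} {r r' : Dim} {M N0 N1 : Tm} :
      A = Tm.bool → Step (Tm.hcom Dim.d0 A r r' M N0 N1) (N0.dopen r')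
  | hcomBool1 {A : Tm} {r r' : Dim} {M N0 N1 : Tm} :
      A = Tm.bool → Step (Tm.hcom Dim.d1 A r r' M N0 N1) (N1.dopen r')
  | hcomBoolRefl {x : ℕ} {r : Dim} {M N0 N1 : Tm} :
      Step (Tm.hcom (Dim.fvar x) Tm.bool r r M N0 N1) M
  | ifbCong {A M M' T F : Tm} :
      Step M M' → Step (Tm.ifb A M T F) (Tm.ifb A M' T F)
  | ifbTrue {A T F : Tm} : Step (Tm.ifb A Tm.tt T F) T
  | ifbFalse {A T F : Tm} : Step (Tm.ifb A Tm.ff T F) F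
  | ifbHcom {A : Tm} {x : ℕ} {r r' : Dim} {M N0 N1 T F : Tm} :
      r ≠ r' →
      Step (Tm.ifb A (Tm.hcom (Dim.fvar x) Tm.bool r r' M N0 N1) T F)
        (Tm.hcom (Dim.fvar x) A r r'
          (Tm.ifb A M T F) (Tm.ifb A N0 T F) (Tm.ifb A N1 T F))
  | coeBool {r r' : Dim} {M : Tm} : Step (Tm.coe Tm.bool r r' M) M
  -- circle
  | hcomCircle0 {A : Tm} {r r' : Dim} {M N0 N1 : Tm} :
      A = Tm.circle → Step (Tm.hcom Dim.d0 A r r' M N0 N1) (N0.dopen r')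
  | hcomCircle1 {A : Tm} {r r' : Dim} {M N0 N1 : Tm} :
      A = Tm.circle → Step (Tm.hcom Dim.d1 A r r' M N0 N1) (N1.dopen r')
  | hcomCircleRefl {x : ℕ} {r : Dim} {M N0 N1 : Tm} :
      Step (Tm.hcom (Dim.fvar x) Tm.circle r r M N0 N1) M
  | loopConst {ε : Dim} : IsConst ε → Step (Tm.loop ε) Tm.base
  | celimCong {A M M' P L : Tm} :
      Step M M' → Step (Tm.celim A M P L) (Tm.celim A M' P L)
  | celimBase {A P L : Tm} : Step (Tm.celim A Tm.base P L) P
  | celimLoop {A P L : Tm} {w : ℕ} :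
      Step (Tm.celim A (Tm.loop (Dim.fvar w)) P L) (L.dopen (Dim.fvar w))
  | celimHcom {A : Tm} {x : ℕ} {r r' : Dim} {M N0 N1 P L : Tm} :
      r ≠ r' →
      Step (Tm.celim A (Tm.hcom (Dim.fvar x) Tm.circle r r' M N0 N1) P L)
        (Tm.hcom (Dim.fvar x) A r r'
          (Tm.celim A M P L) (Tm.celim A N0 P L) (Tm.celim A N1 P L))
  | coeCircle {r r' : Dim} {M : Tm} : Step (Tm.coe Tm.circle r r' M) M
  -- not
  | notel0 {M : Tm} : Step (Tm.notel Dim.d0 M) (notTm M)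
  | notel1 {M : Tm} : Step (Tm.notel Dim.d1 M) M
  | coeNotFlip {ε ε' : Dim} {M : Tm} :
      IsConst ε → IsConst ε' → ε ≠ ε' →
      Step (Tm.coe (Tm.notb (Dim.bvar 0)) ε ε' M) (notTm M)
  | coeNotRefl {ε : Dim} {M : Tm} :
      IsConst ε → Step (Tm.coe (Tm.notb (Dim.bvar 0)) ε ε M) M
  | coeNot0x {y : ℕ} {M : Tm} :
      Step (Tm.coe (Tm.notb (Dim.bvar 0)) Dim.d0 (Dim.fvar y) M)
        (Tm.notel (Dim.fvar y) (notTm M))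
  | coeNot1x {y : ℕ} {M : Tm} :
      Step (Tm.coe (Tm.notb (Dim.bvar 0)) Dim.d1 (Dim.fvar y) M)
        (Tm.notel (Dim.fvar y) M)
  | coeNotxCong {y : ℕ} {r : Dim} {M M' : Tm} :
      Step M M' →
      Step (Tm.coe (Tm.notb (Dim.bvar 0)) (Dim.fvar y) r M)
        (Tm.coe (Tm.notb (Dim.bvar 0)) (Dim.fvar y) r M')
  | coeNotxNotel {y : ℕ} {r : Dim} {M : Tm} :
      Step (Tm.coe (Tm.notb (Dim.bvar 0)) (Dim.fvar y) r (Tm.notel (Dim.fvar y) M))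
        (Tm.notel r M)
  | coeNotOther {y : ℕ} {r r' : Dim} {M : Tm} :
      Step (Tm.coe (Tm.notb (Dim.fvar y)) r r' M) M
  | hcomNot {e : Dim} {w : ℕ} {r r' : Dim} {M N0 N1 : Tm} :
      Step (Tm.hcom e (Tm.notb (Dim.fvar w)) r r' M N0 N1)
        (Tm.notel (Dim.fvar w)
          (Tm.hcom e Tm.bool r r'
            (Tm.coe (Tm.notb (Dim.bvar 0)) (Dim.fvar w) Dim.d1 M)
            (Tm.coe (Tm.notb (Dim.bvar 0)) (Dim.fvar w) Dim.d1 N0)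
            (Tm.coe (Tm.notb (Dim.bvar 0)) (Dim.fvar w) Dim.d1 N1)))

/-- Iterated evaluation `M ↦* M′`. -/
def Steps : Tm → Tm → Prop := Relation.ReflTransGen Step

/-- Evaluation `M ⇓ V`. -/
def Eval (M V : Tm) : Prop := Steps M V ∧ IsVal V

/-- `ψ` is a total dimension substitution from `Ψ′` to `Ψ`: every name in `Ψ`
is sent to `0`, `1`, or a name in `Ψ′`. -/
def DSubst (ψ : ℕ → Dim) (Ψ' Ψ : Finset ℕ) : Prop :=
  ∀ x ∈ Ψ, ψ x = Dim.d0 ∨ ψ x = Dim.d1 ∨ ∃ y ∈ Ψ', ψ x = Dim.fvar y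

/-- Composition of dimension substitutions: first `ψ₁`, then `ψ₂`
(so that `M(comp ψ₁ ψ₂) = (Mψ₁)ψ₂`). -/
def dcomp (ψ₁ ψ₂ : ℕ → Dim) : ℕ → Dim := fun x => (ψ₁ x).subst ψ₂

/-- A candidate cubical type system: it designates certain values of each
dimension as naming PERs on values of the same dimension. -/
structure TypeSys where
  /-- The value `A` names a PER at dimension context `Ψ`. -/
  isPer : Finset ℕ → Tm → Prop
  /-- `M ≈ N ∈ ⟦A⟧_Ψ` : values `M`, `N` are related in the PER named by the
  value `A` at `Ψ`. -/
  vper : Finset ℕ → Tm → Tm → Tm → Prop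
  vper_symm : ∀ {Ψ A M N}, vper Ψ A M N → vper Ψ A N M
  vper_trans : ∀ {Ψ A M N P}, vper Ψ A M N → vper Ψ A N P → vper Ψ A M P

namespace TypeSys

variable (τ : TypeSys)

/-- The values `A` and `B` name equal PERs at `Ψ`. -/
def eqPer (Ψ : Finset ℕ) (A B : Tm) : Prop :=
  τ.isPer Ψ A ∧ τ.isPer Ψ B ∧ ∀ M N, (τ.vper Ψ A M N ↔ τ.vper Ψ B M N)

/-- `A ≐ B pretype [Ψ]` : all iterated dimension-substitution instances of `A`
and `B` evaluate coherently to values naming equal PERs. -/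
def ceqPretype (Ψ : Finset ℕ) (A B : Tm) : Prop :=
  ∀ (Ψ₁ Ψ₂ : Finset ℕ) (ψ₁ ψ₂ : ℕ → Dim),
    DSubst ψ₁ Ψ₁ Ψ → DSubst ψ₂ Ψ₂ Ψ₁ →
    ∃ A₁ A₂ A₁₂ B₁ B₂ B₁₂,
      Eval (A.dsubst ψ₁) A₁ ∧ Eval (A₁.dsubst ψ₂) A₂ ∧
      Eval (A.dsubst (dcomp ψ₁ ψ₂)) A₁₂ ∧
      Eval (B.dsubst ψ₁) B₁ ∧ Eval (B₁.dsubst ψ₂) B₂ ∧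
      Eval (B.dsubst (dcomp ψ₁ ψ₂)) B₁₂ ∧
      τ.eqPer Ψ₂ A₂ A₁₂ ∧ τ.eqPer Ψ₂ A₁₂ B₂ ∧ τ.eqPer Ψ₂ B₂ B₁₂

/-- `A pretype [Ψ]`. -/
def cpretype (Ψ : Finset ℕ) (A : Tm) : Prop := τ.ceqPretype Ψ A A

/-- `M ≐ N ∈ A [Ψ]` : all iterated dimension-substitution instances of `M` and
`N` evaluate coherently to values related in the PER named by the value of the
corresponding instance of `A`. -/
def ceqTm (Ψ : Finset ℕ) (A M N : Tm) : Prop :=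
  ∀ (Ψ₁ Ψ₂ : Finset ℕ) (ψ₁ ψ₂ : ℕ → Dim),
    DSubst ψ₁ Ψ₁ Ψ → DSubst ψ₂ Ψ₂ Ψ₁ →
    ∃ M₁ M₂ M₁₂ N₁ N₂ N₁₂ A₁₂,
      Eval (M.dsubst ψ₁) M₁ ∧ Eval (M₁.dsubst ψ₂) M₂ ∧
      Eval (M.dsubst (dcomp ψ₁ ψ₂)) M₁₂ ∧
      Eval (N.dsubst ψ₁) N₁ ∧ Eval (N₁.dsubst ψ₂) N₂ ∧
      Eval (N.dsubst (dcomp ψ₁ ψ₂)) N₁₂ ∧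
      Eval (A.dsubst (dcomp ψ₁ ψ₂)) A₁₂ ∧
      τ.vper Ψ₂ A₁₂ M₂ M₁₂ ∧ τ.vper Ψ₂ A₁₂ M₁₂ N₂ ∧ τ.vper Ψ₂ A₁₂ N₂ N₁₂

/-- `M ∈ A [Ψ]`. -/
def cofTm (Ψ : Finset ℕ) (A M : Tm) : Prop := τ.ceqTm Ψ A M M

/-- The pretype `A` is cubical: values related in the PER named by the value of
any instance `Aψ` are related as full members of `Aψ`. -/
def Cubical (Ψ : Finset ℕ) (A : Tm) : Prop :=
  ∀ (Ψ' : Finset ℕ) (ψ : ℕ → Dim), DSubst ψ Ψ' Ψ →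
    ∀ A₀, Eval (A.dsubst ψ) A₀ →
      ∀ M N, τ.vper Ψ' A₀ M N → τ.ceqTm Ψ' (A.dsubst ψ) M N

end TypeSys

/-- The dimension constant associated to a side `ε ∈ {0,1}` (encoded as a
`Bool`). -/
def dc : Bool → Dim := fun b => bif b then Dim.d1 else Dim.d0

/-- Select the `ε` tube of a composition problem. -/
def pick (b : Bool) (N0 N1 : Tm) : Tm := bif b then N1 else N0

namespace TypeSys

variable (τ : TypeSys)

/-- First uniform Kan condition: well-typedness (and congruence) of `hcom`. -/
def Kan1 (Ψ : Finset ℕ) (A : Tm) : Prop :=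
  ∀ (Ψ' : Finset ℕ) (x : ℕ), x ∉ Ψ' →
  ∀ ψ : ℕ → Dim, DSubst ψ (insert x Ψ') Ψ →
  ∀ r r' : Dim, wfDim (insert x Ψ') r → wfDim (insert x Ψ') r' →
  ∀ y : ℕ, y ∉ insert x Ψ' →
  ∀ M O N0 N1 P0 P1 : Tm,
    τ.ceqTm (insert x Ψ') (A.dsubst ψ) M O →
    (∀ b : Bool,
      τ.ceqTm (insert y Ψ') ((A.dsubst ψ).dsubstName x (dc b))
        (((pick b N0 N1).dopen (Dim.fvar y)).dsubstName x (dc b))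
        (((pick b P0 P1).dopen (Dim.fvar y)).dsubstName x (dc b))) →
    (∀ b : Bool,
      τ.ceqTm Ψ' ((A.dsubst ψ).dsubstName x (dc b))
        (((pick b N0 N1).dopen r).dsubstName x (dc b))
        (M.dsubstName x (dc b))) →
    τ.ceqTm (insert x Ψ') (A.dsubst ψ)
      (Tm.hcom (Dim.fvar x) (A.dsubst ψ) r r' M N0 N1)
      (Tm.hcom (Dim.fvar x) (A.dsubst ψ) r r' O P0 P1)

/-- Second uniform Kan condition: `hcom` from `r` to `r` is its cap. -/
def Kan2 (Ψ : Finset ℕ) (A : Tm) : Prop :=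
  ∀ (Ψ' : Finset ℕ) (x : ℕ), x ∉ Ψ' →
  ∀ ψ : ℕ → Dim, DSubst ψ (insert x Ψ') Ψ →
  ∀ r : Dim, wfDim (insert x Ψ') r →
  ∀ y : ℕ, y ∉ insert x Ψ' →
  ∀ M N0 N1 : Tm,
    τ.cofTm (insert x Ψ') (A.dsubst ψ) M →
    (∀ b : Bool,
      τ.cofTm (insert y Ψ') ((A.dsubst ψ).dsubstName x (dc b))
        (((pick b N0 N1).dopen (Dim.fvar y)).dsubstName x (dc b))) →
    (∀ b : Bool,
      τ.ceqTm Ψ' ((A.dsubst ψ).dsubstName x (dc b))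
        (((pick b N0 N1).dopen r).dsubstName x (dc b))
        (M.dsubstName x (dc b))) →
    τ.ceqTm (insert x Ψ') (A.dsubst ψ)
      (Tm.hcom (Dim.fvar x) (A.dsubst ψ) r r M N0 N1) M

/-- Third uniform Kan condition: `hcom` of extent a constant `ε` is its `ε`
tube face. -/
def Kan3 (Ψ : Finset ℕ) (A : Tm) : Prop :=
  ∀ (Ψ' : Finset ℕ) (ψ : ℕ → Dim), DSubst ψ Ψ' Ψ →
  ∀ r r' : Dim, wfDim Ψ' r → wfDim Ψ' r' →
  ∀ y : ℕ, y ∉ Ψ' →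
  ∀ (b : Bool) (M N0 N1 : Tm),
    τ.cofTm Ψ' (A.dsubst ψ) M →
    τ.cofTm (insert y Ψ') (A.dsubst ψ) ((pick b N0 N1).dopen (Dim.fvar y)) →
    τ.ceqTm Ψ' (A.dsubst ψ) ((pick b N0 N1).dopen r) M →
    τ.ceqTm Ψ' (A.dsubst ψ)
      (Tm.hcom (dc b) (A.dsubst ψ) r r' M N0 N1)
      ((pick b N0 N1).dopen r')

/-- Fourth uniform Kan condition: well-typedness (and congruence) of `coe`. -/
def Kan4 (Ψ : Finset ℕ) (A : Tm) : Prop :=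
  ∀ (Ψ' : Finset ℕ) (x : ℕ), x ∉ Ψ' →
  ∀ ψ : ℕ → Dim, DSubst ψ (insert x Ψ') Ψ →
  ∀ r r' : Dim, wfDim Ψ' r → wfDim Ψ' r' →
  ∀ M N : Tm,
    τ.ceqTm Ψ' ((A.dsubst ψ).dsubstName x r) M N →
    τ.ceqTm Ψ' ((A.dsubst ψ).dsubstName x r')
      (Tm.coe ((A.dsubst ψ).close x) r r' M)
      (Tm.coe ((A.dsubst ψ).close x) r r' N)

/-- The pretype `A` is (uniformly) Kan. -/
def isKan (Ψ : Finset ℕ) (A : Tm) : Prop :=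
  τ.Kan1 Ψ A ∧ τ.Kan2 Ψ A ∧ τ.Kan3 Ψ A ∧ τ.Kan4 Ψ A

/-- `A type [Ψ]` : `A` is a cubical Kan pretype. -/
def ctype (Ψ : Finset ℕ) (A : Tm) : Prop :=
  τ.cpretype Ψ A ∧ τ.Cubical Ψ A ∧ τ.isKan Ψ A

/-- The open judgment `Γ ≫ M ≐ M′ ∈ B [Ψ]`, defined by functionality.  The
context is a list of pretypes, the head corresponding to the innermost
(de Bruijn index `0`) term variable. -/
def eqOpen (t : TypeSys) : Finset ℕ → List Tm → Tm → Tm → Tm → Prop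
  | Ψ, [], B, M, M' => t.ceqTm Ψ B M M'
  | Ψ, A :: Γ, B, M, M' =>
      ∀ (Ψ' : Finset ℕ) (ψ : ℕ → Dim), DSubst ψ Ψ' Ψ →
      ∀ N N' : Tm,
        eqOpen t Ψ' (Γ.map (Tm.dsubst ψ)) (A.dsubst ψ) N N' →
        eqOpen t Ψ' (Γ.map (Tm.dsubst ψ)) (B.dsubst ψ)
          ((M.dsubst ψ).tsubst 0 N) ((M'.dsubst ψ).tsubst 0 N')
  termination_by _ Γ _ _ _ => Γ.length
  decreasing_by all_goals (simp [List.length_map]; try omega)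

/-- Equal simultaneous closing term substitutions `γ ≐ γ′ ∈ Γ [Ψ]`
(componentwise equal elements of the pretypes of `Γ`). -/
def ceqSubst (t : TypeSys) (Ψ : Finset ℕ) : List Tm → List Tm → List Tm → Prop
  | [], [], [] => True
  | A :: Γ, N :: γ, N' :: γ' => t.ceqTm Ψ A N N' ∧ ceqSubst t Ψ Γ γ γ'
  | _, _, _ => False

end TypeSys

/-- The PER of the booleans, as a higher inductive type: the least relation
containing `true ≈ true`, `false ≈ false`, and relating formal `hcom` values
with equal caps and tubes (relative to the ambient type system `τ`). -/
inductive BoolPer (τ : TypeSys) : Finset ℕ → Tm → Tm → Prop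
  | tt (Ψ : Finset ℕ) : BoolPer τ Ψ Tm.tt Tm.tt
  | ff (Ψ : Finset ℕ) : BoolPer τ Ψ Tm.ff Tm.ff
  | hcom (Ψ : Finset ℕ) (x : ℕ) (r r' : Dim) (y : ℕ)
      (M O N0 N1 P0 P1 : Tm) :
      x ∉ Ψ → wfDim (insert x Ψ) r → wfDim (insert x Ψ) r' → r ≠ r' →
      y ∉ insert x Ψ →
      τ.ceqTm (insert x Ψ) Tm.bool M O →
      (∀ b : Bool,
        τ.ceqTm (insert y Ψ) Tm.bool
          (((pick b N0 N1).dopen (Dim.fvar y)).dsubstName x (dc b))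
          (((pick b P0 P1).dopen (Dim.fvar y)).dsubstName x (dc b))) →
      (∀ b : Bool,
        τ.ceqTm Ψ Tm.bool
          (((pick b N0 N1).dopen r).dsubstName x (dc b))
          (M.dsubstName x (dc b))) →
      BoolPer τ (insert x Ψ)
        (Tm.hcom (Dim.fvar x) Tm.bool r r' M N0 N1)
        (Tm.hcom (Dim.fvar x) Tm.bool r r' O P0 P1)

/-- The PER of the circle, as a higher inductive type. -/
inductive CirclePer (τ : TypeSys) : Finset ℕ → Tm → Tm → Prop
  | base (Ψ : Finset ℕ) : CirclePer τ Ψ Tm.base Tm.base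
  | loop (Ψ : Finset ℕ) (x : ℕ) :
      x ∈ Ψ → CirclePer τ Ψ (Tm.loop (Dim.fvar x)) (Tm.loop (Dim.fvar x))
  | hcom (Ψ : Finset ℕ) (x : ℕ) (r r' : Dim) (y : ℕ)
      (M O N0 N1 P0 P1 : Tm) :
      x ∉ Ψ → wfDim (insert x Ψ) r → wfDim (insert x Ψ) r' → r ≠ r' →
      y ∉ insert x Ψ →
      τ.ceqTm (insert x Ψ) Tm.circle M O →
      (∀ b : Bool,
        τ.ceqTm (insert y Ψ) Tm.circle
          (((pick b N0 N1).dopen (Dim.fvar y)).dsubstName x (dc b))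
          (((pick b P0 P1).dopen (Dim.fvar y)).dsubstName x (dc b))) →
      (∀ b : Bool,
        τ.ceqTm Ψ Tm.circle
          (((pick b N0 N1).dopen r).dsubstName x (dc b))
          (M.dsubstName x (dc b))) →
      CirclePer τ (insert x Ψ)
        (Tm.hcom (Dim.fvar x) Tm.circle r r' M N0 N1)
        (Tm.hcom (Dim.fvar x) Tm.circle r r' O P0 P1)

/-- The PER of a product type `A × B`. -/
def ProdPer (τ : TypeSys) (Ψ : Finset ℕ) (A B M N : Tm) : Prop :=
  ∃ M₁ M₂ N₁ N₂, M = Tm.pair M₁ N₁ ∧ N = Tm.pair M₂ N₂ ∧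
    τ.ceqTm Ψ A M₁ M₂ ∧ τ.ceqTm Ψ B N₁ N₂

/-- The PER of a function type `A → B`. -/
def ArrPer (τ : TypeSys) (Ψ : Finset ℕ) (A B M N : Tm) : Prop :=
  ∃ M₁ M₂, M = Tm.lam M₁ ∧ N = Tm.lam M₂ ∧ τ.eqOpen Ψ [A] B M₁ M₂

/-- The PER of the line `not(x)`. -/
def NotPer (τ : TypeSys) (Ψ : Finset ℕ) (x : ℕ) (M N : Tm) : Prop :=
  ∃ M' N', M = Tm.notel (Dim.fvar x) M' ∧ N = Tm.notel (Dim.fvar x) N' ∧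
    τ.ceqTm Ψ Tm.bool M' N'

/-- A cubical type system interpreting the type formers of the paper:
`bool` and `S¹` name their (least, higher inductive) PERs, products,
functions, and the line `not(x)` name the PERs described in the paper. -/
structure StdTypeSys extends TypeSys where
  bool_isPer : ∀ Ψ, isPer Ψ Tm.bool
  bool_vper : ∀ Ψ M N, vper Ψ Tm.bool M N ↔ BoolPer toTypeSys Ψ M N
  circle_isPer : ∀ Ψ, isPer Ψ Tm.circle
  circle_vper : ∀ Ψ M N, vper Ψ Tm.circle M N ↔ CirclePer toTypeSys Ψ M N
  prod_isPer : ∀ Ψ A B, toTypeSys.ctype Ψ A → toTypeSys.ctype Ψ B →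
    isPer Ψ (Tm.prod A B)
  prod_vper : ∀ Ψ A B M N, toTypeSys.ctype Ψ A → toTypeSys.ctype Ψ B →
    (vper Ψ (Tm.prod A B) M N ↔ ProdPer toTypeSys Ψ A B M N)
  arr_isPer : ∀ Ψ A B, toTypeSys.ctype Ψ A → toTypeSys.ctype Ψ B →
    isPer Ψ (Tm.arr A B)
  arr_vper : ∀ Ψ A B M N, toTypeSys.ctype Ψ A → toTypeSys.ctype Ψ B →
    (vper Ψ (Tm.arr A B) M N ↔ ArrPer toTypeSys Ψ A B M N)
  not_isPer : ∀ Ψ x, x ∈ Ψ → isPer Ψ (Tm.notb (Dim.fvar x))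
  not_vper : ∀ Ψ x, x ∈ Ψ → ∀ M N,
    (vper Ψ (Tm.notb (Dim.fvar x)) M N ↔ NotPer toTypeSys Ψ x M N)


/-! Each iterated instance of `M ≐ N ∈ A` needs three relations. Two of them are the coherence of
`M` and of `N` separately, the third is the pointwise hypothesis at the composite `ψ₁ψ₂`. The three
hypotheses provide values of `Aψ₁ψ₂`, `Mψ₁ψ₂` and `Nψ₁ψ₂` obtained from unrelated evaluations;
these agree because weak-head reduction is deterministic. -/

theorem dSubst_iff_forall_wfDim {ψ : ℕ → Dim} {Ψ' Ψ : Finset ℕ} :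
    DSubst ψ Ψ' Ψ ↔ ∀ x ∈ Ψ, wfDim Ψ' (ψ x) := by
  refine forall₂_congr fun x _ ↦ ?_
  cases ψ x <;> simp [wfDim]

theorem wfDim.subst {ψ : ℕ → Dim} {Ψ' Ψ : Finset ℕ} {r : Dim} (hr : wfDim Ψ r)
    (hψ : DSubst ψ Ψ' Ψ) : wfDim Ψ' (r.subst ψ) := by
  cases r with
  | d0 | d1 => trivial
  | fvar x => exact dSubst_iff_forall_wfDim.1 hψ x hr
  | bvar i => exact hr.elim

theorem DSubst.dcomp {ψ₁ ψ₂ : ℕ → Dim} {Ψ Ψ₁ Ψ₂ : Finset ℕ} (h₁ : DSubst ψ₁ Ψ₁ Ψ)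
    (h₂ : DSubst ψ₂ Ψ₂ Ψ₁) : DSubst (dcomp ψ₁ ψ₂) Ψ₂ Ψ :=
  dSubst_iff_forall_wfDim.2 fun x hx ↦ (dSubst_iff_forall_wfDim.1 h₁ x hx).subst h₂

theorem IsVal.not_step {V M : Tm} (hV : IsVal V) : ¬ Step V M := by
  intro h
  cases hV <;> cases h <;> grind [IsConst, cases Step]

theorem IsVal.eq_of_steps {V M : Tm} (hV : IsVal V) (h : Steps V M) : M = V :=
  (Relation.reflTransGen_iff_eq fun _ ↦ hV.not_step).1 h

/-- Evaluation frames, encoded as functions `Tm → Tm`: the term formers, with all but their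
principal argument fixed, under which `Step` has a congruence rule. -/
inductive EvalFrame : (Tm → Tm) → Prop
  | app (N : Tm) : EvalFrame fun M ↦ Tm.app M N
  | fst : EvalFrame Tm.fst
  | snd : EvalFrame Tm.snd
  | ifb (A T F : Tm) : EvalFrame fun M ↦ Tm.ifb A M T F
  | celim (A P L : Tm) : EvalFrame fun M ↦ Tm.celim A M P L
  | coeTy (r r' : Dim) (M : Tm) : EvalFrame fun A ↦ Tm.coe A r r' M
  | coeNot (y : ℕ) (r : Dim) :
      EvalFrame fun M ↦ Tm.coe (Tm.notb (Dim.bvar 0)) (Dim.fvar y) r M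
  | hcomTy (e r r' : Dim) (M N0 N1 : Tm) : EvalFrame fun A ↦ Tm.hcom e A r r' M N0 N1

-- The computation rules for `E M` require `M` to be irreducible.
theorem EvalFrame.exists_step_of_step {E : Tm → Tm} {M M' N : Tm} (hE : EvalFrame E)
    (hM : Step M M') (h : Step (E M) N) : ∃ M'', Step M M'' ∧ N = E M'' := by
  cases hE <;> cases h <;> grind [IsConst, cases Step]

theorem EvalFrame.eq_of_step {E : Tm → Tm} {M M' N : Tm} (hE : EvalFrame E) (hM : Step M M')
    (hM_unique : ∀ ⦃M''⦄, Step M M'' → M' = M'') (h : Step (E M) N) : E M' = N := by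
  obtain ⟨M'', hM'', rfl⟩ := hE.exists_step_of_step hM h
  rw [hM_unique hM'']

theorem Step.rightUnique : Relator.RightUnique Step := by
  intro M N N' h h'
  induction h generalizing N' with
  | appL h ih => exact (EvalFrame.app _).eq_of_step h ih h'
  | fstCong h ih => exact EvalFrame.fst.eq_of_step h ih h'
  | sndCong h ih => exact EvalFrame.snd.eq_of_step h ih h'
  | ifbCong h ih => exact (EvalFrame.ifb _ _ _).eq_of_step h ih h'
  | celimCong h ih => exact (EvalFrame.celim _ _ _).eq_of_step h ih h'
  | coeTy h ih => exact (EvalFrame.coeTy _ _ _).eq_of_step h ih h'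
  | coeNotxCong h ih => exact (EvalFrame.coeNot _ _).eq_of_step h ih h'
  | hcomTy h ih => exact (EvalFrame.hcomTy _ _ _ _ _ _).eq_of_step h ih h'
  -- Computation rules have irreducible principal arguments and pairwise disjoint redexes.
  | _ => cases h' <;> grind [IsConst, cases Step]

theorem Eval.unique {M V W : Tm} (hV : Eval M V) (hW : Eval M W) : V = W := by
  rcases Relation.ReflTransGen.total_of_right_unique Step.rightUnique hV.1 hW.1 with h | h
  · exact (hV.2.eq_of_steps h).symm
  · exact hW.2.eq_of_steps h

theorem TypeSys.cofTm.exists_vper_of_eval {τ : TypeSys} {Ψ Ψ₁ Ψ₂ : Finset ℕ} {A M A₁₂ M₁₂ : Tm}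
    {ψ₁ ψ₂ : ℕ → Dim} (hM : τ.cofTm Ψ A M) (h₁ : DSubst ψ₁ Ψ₁ Ψ) (h₂ : DSubst ψ₂ Ψ₂ Ψ₁)
    (hA₁₂ : Eval (A.dsubst (dcomp ψ₁ ψ₂)) A₁₂)
    (hM₁₂ : Eval (M.dsubst (dcomp ψ₁ ψ₂)) M₁₂) :
    ∃ M₁ M₂, Eval (M.dsubst ψ₁) M₁ ∧ Eval (M₁.dsubst ψ₂) M₂ ∧ τ.vper Ψ₂ A₁₂ M₂ M₁₂ := by
  obtain ⟨M₁, M₂, M', -, -, -, A', hM₁, hM₂, hM', -, -, -, hA', hcoh, -, -⟩ :=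
    hM Ψ₁ Ψ₂ ψ₁ ψ₂ h₁ h₂
  obtain rfl := hA'.unique hA₁₂
  obtain rfl := hM'.unique hM₁₂
  exact ⟨M₁, M₂, hM₁, hM₂, hcoh⟩

/-- **Pointwise relatedness implies exact equality for well-typed terms**: if
`M ∈ A [Ψ]`, `N ∈ A [Ψ]`, and every instance `Mψ`, `Nψ` evaluates to values
related in the PER named by the value of `Aψ`, then `M ≐ N ∈ A [Ψ]`. -/
theorem cofTm_to_ceqTm (τ : TypeSys) (Ψ : Finset ℕ) (A M N : Tm)
    (hM : τ.cofTm Ψ A M) (hN : τ.cofTm Ψ A N)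
    (h : ∀ (Ψ' : Finset ℕ) (ψ : ℕ → Dim), DSubst ψ Ψ' Ψ →
      ∃ A' M₀ N₀, Eval (A.dsubst ψ) A' ∧ Eval (M.dsubst ψ) M₀ ∧
        Eval (N.dsubst ψ) N₀ ∧ τ.vper Ψ' A' M₀ N₀) :
    τ.ceqTm Ψ A M N := by
  intro Ψ₁ Ψ₂ ψ₁ ψ₂ h₁ h₂
  obtain ⟨A₁₂, M₁₂, N₁₂, hA₁₂, hM₁₂, hN₁₂, hMN⟩ := h Ψ₂ (dcomp ψ₁ ψ₂) (h₁.dcomp h₂)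
  obtain ⟨M₁, M₂, hM₁, hM₂, hM_coh⟩ := hM.exists_vper_of_eval h₁ h₂ hA₁₂ hM₁₂
  obtain ⟨N₁, N₂, hN₁, hN₂, hN_coh⟩ := hN.exists_vper_of_eval h₁ h₂ hA₁₂ hN₁₂
  exact ⟨M₁, M₂, M₁₂, N₁, N₂, N₁₂, A₁₂, hM₁, hM₂, hM₁₂, hN₁, hN₂, hN₁₂, hA₁₂, hM_coh,
    τ.vper_trans hMN (τ.vper_symm hN_coh), hN_coh⟩

end CHTT
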